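/- For all x > 0, one has (1/2)·ln(x² + x + 1/3) − (γ − (1/2)·ln 3) < ψ(x+1) < (1/2)·ln(x² + x + 1/3), and the constant γ − (1/2)·ln 3 in the lower bound is best possible. -/

import Mathlib

open Real Filter Set

/-- The digamma function ψ(x) = Γ'(x)/Γ(x), as the derivative of log ∘ Γ. -/
noncomputable def digamma (x : ℝ) : ℝ := deriv (fun y : ℝ => Real.log (Real.Gamma y)) x

/-- L(x,a) = (1/(90a²+2))·ln(x²+x+(3a+1)/3) + (45a²/(90a²+2))·ln(x²+x+(15a−1)/(45a)). -/
noncomputable def L (x a : ℝ) : ℝ :=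
  (1 / (90 * a ^ 2 + 2)) * Real.log (x ^ 2 + x + (3 * a + 1) / 3) +
    (45 * a ^ 2 / (90 * a ^ 2 + 2)) * Real.log (x ^ 2 + x + (15 * a - 1) / (45 * a))

/-! The gap `D x = ½ log (x² + x + 1/3) - ψ (x + 1)` tends to `0` at infinity, and the recurrence
`ψ (x + 1) = ψ x + 1 / x` turns `D x - D (x + 1)` into an elementary function whose derivative is
the negative rational function `-1 / (9 (x² + x + 1/3) ((x + 1)² + (x + 1) + 1/3) (x + 1)²)`.
For `x < y` the sequence `D (x + n) - D (y + n)` is thus strictly decreasing with limit `0`, so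
`D y < D x`. Hence `D` decreases strictly to `0`, and by continuity `D a` is its supremum on
`(a, ∞)`; the constant of the theorem is `D 0`. -/

open scoped Topology

theorem strictAntiOn_Ioi_of_sub_add_one_of_tendsto {G : Type*} [AddCommGroup G] [PartialOrder G]
    [IsOrderedAddMonoid G] [TopologicalSpace G] [OrderClosedTopology G] [ContinuousSub G]
    {f : ℝ → G} {a : ℝ} {l : G}
    (hf : StrictAntiOn (fun x => f x - f (x + 1)) (Ioi a)) (hl : Tendsto f atTop (𝓝 l)) :
    StrictAntiOn f (Ioi a) := by
  intro x hx y hy hxy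
  rw [mem_Ioi] at hx hy
  let u : ℕ → G := fun n => f (x + n) - f (y + n)
  have u_strictAnti : StrictAnti u := by
    refine strictAnti_nat_of_succ_lt fun n => ?_
    have := n.cast_nonneg (α := ℝ)
    have hstep : f (y + n) - f (y + n + 1) < f (x + n) - f (x + n + 1) :=
      hf (mem_Ioi.2 (by linarith)) (mem_Ioi.2 (by linarith)) (by linarith)
    simp only [u, Nat.cast_add, Nat.cast_one, ← add_assoc]
    rwa [sub_lt_sub_iff, add_comm, ← sub_lt_sub_iff]
  have f_tendsto (z : ℝ) : Tendsto (fun n : ℕ => f (z + n)) atTop (𝓝 l) :=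
    hl.comp (tendsto_atTop_add_const_left _ z tendsto_natCast_atTop_atTop)
  have u_tendsto : Tendsto u atTop (𝓝 0) := by
    simpa only [sub_self] using (f_tendsto x).sub (f_tendsto y)
  have u_zero_pos : 0 < u 0 :=
    (u_strictAnti.antitone.le_of_tendsto u_tendsto 1).trans_lt (u_strictAnti zero_lt_one)
  simpa only [u, Nat.cast_zero, add_zero, sub_pos] using u_zero_pos

theorem lt_of_strictAntiOn_Ioi_of_tendsto_atTop {α β : Type*} [LinearOrder α] [NoMaxOrder α]
    [Preorder β] [TopologicalSpace β] [ClosedIicTopology β] {f : α → β} {a x : α} {l : β}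
    (hf : StrictAntiOn f (Ioi a)) (hl : Tendsto f atTop (𝓝 l)) (hx : a < x) : l < f x := by
  have : Nonempty α := ⟨x⟩
  obtain ⟨y, hxy⟩ := exists_gt x
  have hy : a < y := hx.trans hxy
  have l_le : l ≤ f y := le_of_tendsto hl <| by
    filter_upwards [eventually_ge_atTop y] with z hyz
    exact hf.antitoneOn hy (hy.trans_le hyz) hyz
  exact l_le.trans_lt (hf hx hy hxy)

theorem contDiffAt_realGamma {n : WithTop ℕ∞} {x : ℝ} (hx : Real.Gamma x ≠ 0) :
    ContDiffAt ℝ n Real.Gamma x := by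
  have hx' : Complex.Gamma x ≠ 0 := by
    rwa [Complex.Gamma_ofReal, Complex.ofReal_ne_zero]
  -- Inverting the entire function `1 / Γ` gives smoothness away from the poles, where the junk
  -- value of `Γ` is `0`.
  have complex_contDiffAt : ContDiffAt ℂ n Complex.Gamma x := by
    simpa only [Pi.inv_def, inv_inv] using
      Complex.differentiable_one_div_Gamma.contDiff.contDiffAt.inv (inv_ne_zero hx')
  exact complex_contDiffAt.real_of_complex

theorem contDiffAt_log_realGamma {n : WithTop ℕ∞} {x : ℝ} (hx : Real.Gamma x ≠ 0) :
    ContDiffAt ℝ n (fun y => Real.log (Real.Gamma y)) x :=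
  (contDiffAt_realGamma hx).log hx

theorem hasDerivAt_log_realGamma {x : ℝ} (hx : Real.Gamma x ≠ 0) :
    HasDerivAt (fun y => Real.log (Real.Gamma y)) (digamma x) x :=
  ((contDiffAt_log_realGamma (n := 1) hx).differentiableAt one_ne_zero).hasDerivAt

theorem ne_zero_of_realGamma_ne_zero {x : ℝ} (hx : Real.Gamma x ≠ 0) : x ≠ 0 := by
  rintro rfl
  exact hx Real.Gamma_zero

theorem log_realGamma_add_one {x : ℝ} (hx : Real.Gamma x ≠ 0) :
    Real.log (Real.Gamma (x + 1)) = Real.log x + Real.log (Real.Gamma x) := by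
  have hx0 := ne_zero_of_realGamma_ne_zero hx
  rw [Real.Gamma_add_one hx0, Real.log_mul hx0 hx]

theorem continuousAt_digamma {x : ℝ} (hx : Real.Gamma x ≠ 0) : ContinuousAt digamma x :=
  ((contDiffAt_log_realGamma (n := 1) hx).derivWithin (m := 0) (by norm_num)).continuousAt

theorem digamma_one : digamma 1 = -Real.eulerMascheroniConstant := by
  simpa [digamma] using (Real.hasDerivAt_Gamma_one.log (by simp)).deriv

theorem digamma_add_one {x : ℝ} (hx : Real.Gamma x ≠ 0) :
    digamma (x + 1) = digamma x + x⁻¹ := by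
  have hx0 := ne_zero_of_realGamma_ne_zero hx
  have hx1 : Real.Gamma (x + 1) ≠ 0 := Real.Gamma_add_one hx0 ▸ mul_ne_zero hx0 hx
  have shifted : HasDerivAt (fun y => Real.log (Real.Gamma (y + 1))) (digamma (x + 1)) x :=
    (hasDerivAt_log_realGamma hx1).comp_add_const x 1
  have split : HasDerivAt (fun y => Real.log y + Real.log (Real.Gamma y)) (x⁻¹ + digamma x) x :=
    (Real.hasDerivAt_log hx0).add (hasDerivAt_log_realGamma hx)
  have Gamma_continuousAt : ContinuousAt Real.Gamma x :=
    (contDiffAt_realGamma (n := 0) hx).continuousAt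
  rw [add_comm (digamma x)]
  refine shifted.unique (split.congr_of_eventuallyEq ?_)
  filter_upwards [Gamma_continuousAt.eventually_ne hx] with y hy using log_realGamma_add_one hy

theorem slope_log_realGamma_add_one {x : ℝ} (hx : Real.Gamma x ≠ 0) :
    slope (Real.log ∘ Real.Gamma) x (x + 1) = Real.log x := by
  simp [slope_def_field, log_realGamma_add_one hx]

theorem digamma_le_log {x : ℝ} (hx : 0 < x) : digamma x ≤ Real.log x := by
  have hΓ := (Real.Gamma_pos_of_pos hx).ne'
  rw [← slope_log_realGamma_add_one hΓ]
  exact Real.convexOn_log_Gamma.le_slope_of_hasDerivAt hx (mem_Ioi.2 (by positivity))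
    (lt_add_one x) (hasDerivAt_log_realGamma hΓ)

theorem log_le_digamma_add_one {x : ℝ} (hx : 0 < x) : Real.log x ≤ digamma (x + 1) := by
  have hx1 : 0 < x + 1 := by positivity
  rw [← slope_log_realGamma_add_one (Real.Gamma_pos_of_pos hx).ne']
  exact Real.convexOn_log_Gamma.slope_le_of_hasDerivAt hx hx1 (lt_add_one x)
    (hasDerivAt_log_realGamma (Real.Gamma_pos_of_pos hx1).ne')

theorem sq_add_self_add_third_pos (x : ℝ) : 0 < x ^ 2 + x + 1 / 3 := by
  nlinarith [sq_nonneg (x + 1 / 2)]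

theorem log_le_half_log_sq_add_self_add_third {x : ℝ} (hx : 0 < x) :
    Real.log x ≤ 1 / 2 * Real.log (x ^ 2 + x + 1 / 3) := by
  have := Real.log_le_log (by positivity) (by linarith : x ^ 2 ≤ x ^ 2 + x + 1 / 3)
  rw [Real.log_pow, Nat.cast_ofNat] at this
  linarith

theorem half_log_sq_add_self_add_third_le {x : ℝ} (hx : -(2 / 3) ≤ x) :
    1 / 2 * Real.log (x ^ 2 + x + 1 / 3) ≤ Real.log (x + 1) := by
  have := Real.log_le_log (sq_add_self_add_third_pos x)
    (by linarith : x ^ 2 + x + 1 / 3 ≤ (x + 1) ^ 2)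
  rw [Real.log_pow, Nat.cast_ofNat] at this
  linarith

theorem hasDerivAt_half_log_sq_add_self_add_third (x : ℝ) :
    HasDerivAt (fun y : ℝ => 1 / 2 * Real.log (y ^ 2 + y + 1 / 3))
      ((x + 1 / 2) / (x ^ 2 + x + 1 / 3)) x := by
  have inner_deriv : HasDerivAt (fun y : ℝ => y ^ 2 + y + 1 / 3) (2 * x + 1) x := by
    simpa using (((hasDerivAt_id x).pow 2).add (hasDerivAt_id x)).add_const (1 / 3 : ℝ)
  exact ((inner_deriv.log (sq_add_self_add_third_pos x).ne').const_mul (1 / 2)).congr_deriv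
    (by ring)

/-- The error `½ log (x² + x + 1/3) - ψ (x + 1)` of the logarithmic approximation to the digamma
function. -/
noncomputable def digammaGap (x : ℝ) : ℝ :=
  1 / 2 * Real.log (x ^ 2 + x + 1 / 3) - digamma (x + 1)

theorem digammaGap_zero :
    digammaGap 0 = Real.eulerMascheroniConstant - 1 / 2 * Real.log 3 := by
  simp only [digammaGap, zero_add, ne_eq, OfNat.ofNat_ne_zero, not_false_eq_true, zero_pow,
    one_div, Real.log_inv, digamma_one]
  ring

theorem continuousAt_digammaGap {x : ℝ} (hx : -1 < x) : ContinuousAt digammaGap x :=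
  (hasDerivAt_half_log_sq_add_self_add_third x).continuousAt.sub
    ((continuousAt_digamma (Real.Gamma_pos_of_pos (by linarith)).ne').comp (f := (· + 1))
      (by fun_prop))

theorem tendsto_digammaGap_atTop : Tendsto digammaGap atTop (𝓝 0) := by
  have log_diff_tendsto := Real.tendsto_log_comp_add_sub_log 1
  refine tendsto_of_tendsto_of_tendsto_of_le_of_le' (by simpa using log_diff_tendsto.neg)
    log_diff_tendsto ?_ ?_ <;> filter_upwards [eventually_gt_atTop 0] with x hx
  · have := digamma_le_log (by positivity : 0 < x + 1)
    have := log_le_half_log_sq_add_self_add_third hx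
    unfold digammaGap
    linarith
  · have := log_le_digamma_add_one hx
    have := half_log_sq_add_self_add_third_le (by linarith : -(2 / 3) ≤ x)
    unfold digammaGap
    linarith

theorem digammaGap_sub_digammaGap_add_one {x : ℝ} (hx : -1 < x) :
    digammaGap x - digammaGap (x + 1) =
      1 / 2 * Real.log (x ^ 2 + x + 1 / 3) -
        1 / 2 * Real.log ((x + 1) ^ 2 + (x + 1) + 1 / 3) + (x + 1)⁻¹ := by
  have hΓ := (Real.Gamma_pos_of_pos (by linarith : 0 < x + 1)).ne'
  rw [digammaGap, digammaGap, digamma_add_one hΓ]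
  ring

theorem hasDerivAt_digammaGap_sub_digammaGap_add_one {x : ℝ} (hx : -1 < x) :
    HasDerivAt (fun y => digammaGap y - digammaGap (y + 1))
      (-1 / (9 * (x ^ 2 + x + 1 / 3) * ((x + 1) ^ 2 + (x + 1) + 1 / 3) * (x + 1) ^ 2)) x := by
  have hx1 : x + 1 ≠ 0 := by linarith
  have elementary := ((hasDerivAt_half_log_sq_add_self_add_third x).sub
    ((hasDerivAt_half_log_sq_add_self_add_third (x + 1)).comp_add_const x 1)).add
      ((hasDerivAt_inv hx1).comp_add_const x 1)
  have deriv_eq :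
      (x + 1 / 2) / (x ^ 2 + x + 1 / 3) -
          (x + 1 + 1 / 2) / ((x + 1) ^ 2 + (x + 1) + 1 / 3) + -((x + 1) ^ 2)⁻¹ =
        -1 / (9 * (x ^ 2 + x + 1 / 3) * ((x + 1) ^ 2 + (x + 1) + 1 / 3) * (x + 1) ^ 2) := by
    have hp := (sq_add_self_add_third_pos x).ne'
    have hq := (sq_add_self_add_third_pos (x + 1)).ne'
    generalize p_eq : x ^ 2 + x + 1 / 3 = p at hp ⊢
    generalize q_eq : (x + 1) ^ 2 + (x + 1) + 1 / 3 = q at hq ⊢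
    field_simp
    rw [← p_eq, ← q_eq]
    ring
  rw [deriv_eq] at elementary
  refine elementary.congr_of_eventuallyEq ?_
  filter_upwards [lt_mem_nhds hx] with y hy using digammaGap_sub_digammaGap_add_one hy

theorem strictAntiOn_digammaGap_sub_digammaGap_add_one :
    StrictAntiOn (fun x => digammaGap x - digammaGap (x + 1)) (Ioi (-1)) := by
  refine strictAntiOn_of_hasDerivWithinAt_neg (convex_Ioi _)
    (fun x hx => (hasDerivAt_digammaGap_sub_digammaGap_add_one hx).continuousAt.continuousWithinAt)
    (fun x hx => (hasDerivAt_digammaGap_sub_digammaGap_add_one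
      (interior_subset hx)).hasDerivWithinAt) fun x hx => ?_
  have : 0 < x + 1 := by linarith [mem_Ioi.1 (interior_subset hx)]
  have := sq_add_self_add_third_pos x
  exact div_neg_of_neg_of_pos (by norm_num) (by positivity)

theorem strictAntiOn_digammaGap : StrictAntiOn digammaGap (Ioi (-1)) :=
  strictAntiOn_Ioi_of_sub_add_one_of_tendsto strictAntiOn_digammaGap_sub_digammaGap_add_one
    tendsto_digammaGap_atTop

theorem digammaGap_pos {x : ℝ} (hx : -1 < x) : 0 < digammaGap x :=
  lt_of_strictAntiOn_Ioi_of_tendsto_atTop strictAntiOn_digammaGap tendsto_digammaGap_atTop hx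

theorem stmt_12_general {a : ℝ} (ha : -1 < a) :
    (∀ x : ℝ, a < x →
      1 / 2 * Real.log (x ^ 2 + x + 1 / 3) - digammaGap a < digamma (x + 1) ∧
        digamma (x + 1) < 1 / 2 * Real.log (x ^ 2 + x + 1 / 3)) ∧
    (∀ c : ℝ, (∀ x : ℝ, a < x → 1 / 2 * Real.log (x ^ 2 + x + 1 / 3) - c < digamma (x + 1)) →
      digammaGap a ≤ c) := by
  refine ⟨fun x hx => ⟨?_, ?_⟩, fun c hc => ?_⟩
  · exact sub_lt_comm.1 (strictAntiOn_digammaGap ha (ha.trans hx) hx)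
  · exact sub_pos.1 (digammaGap_pos (ha.trans hx))
  · have digammaGap_tendsto : Tendsto digammaGap (𝓝[>] a) (𝓝 (digammaGap a)) :=
      (continuousAt_digammaGap ha).mono_left nhdsWithin_le_nhds
    refine le_of_tendsto digammaGap_tendsto ?_
    filter_upwards [self_mem_nhdsWithin] with x hx
    exact (sub_lt_comm.1 (hc x hx)).le

/-- For x > 0, (1/2)ln(x²+x+1/3) − (γ − (1/2)ln 3) < ψ(x+1) < (1/2)ln(x²+x+1/3), and the
constant γ − (1/2)ln 3 in the lower bound is best possible. -/
theorem stmt_12 :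
    (∀ x : ℝ, 0 < x →
      (1 / 2) * Real.log (x ^ 2 + x + 1 / 3) -
          (Real.eulerMascheroniConstant - (1 / 2) * Real.log 3) < digamma (x + 1) ∧
        digamma (x + 1) < (1 / 2) * Real.log (x ^ 2 + x + 1 / 3)) ∧
    (∀ c : ℝ, (∀ x : ℝ, 0 < x → (1 / 2) * Real.log (x ^ 2 + x + 1 / 3) - c < digamma (x + 1)) →
      Real.eulerMascheroniConstant - (1 / 2) * Real.log 3 ≤ c) := by
  simpa only [digammaGap_zero] using stmt_12_general neg_one_lt_zero
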